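/- arXiv:1111.5864 — 2 statements merged into one kernel-verified Lean document; each statement's English description precedes it below -/
import Mathlib

section
/- Let Cₙ be the cycle of order n ≥ 3, and let f : V(G₁) → V(G₂) be a function between two disjoint copies G₁, G₂ of Cₙ whose image has size s = |f(V(G₁))| with 1 < s < n. Then 2 ≤ dim(C(Cₙ, f)) ≤ 2(n − 1) − s. -/
/-- The functigraph `C(G, f)`: two disjoint copies of `G` (as `Sum.inl`/`Sum.inr`),
with an edge from each `Sum.inl u` to `Sum.inr (f u)`. -/
def functigraph {V : Type*} (G : SimpleGraph V) (f : V → V) : SimpleGraph (V ⊕ V) :=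
  SimpleGraph.fromRel (fun x y =>
    match x, y with
    | Sum.inl a, Sum.inl b => G.Adj a b
    | Sum.inr a, Sum.inr b => G.Adj a b
    | Sum.inl a, Sum.inr b => f a = b
    | Sum.inr _, Sum.inl _ => False)

/-- `S` is a resolving set of `H`: every pair of distinct vertices is resolved by some `w ∈ S`. -/
def IsResolving {V : Type*} (H : SimpleGraph V) (S : Set V) : Prop :=
  ∀ x y : V, x ≠ y → ∃ w ∈ S, H.dist x w ≠ H.dist y w

/-- The metric dimension of `H`: minimum cardinality of a (finite) resolving set. -/
noncomputable def metricDim {V : Type*} (H : SimpleGraph V) : ℕ :=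
  sInf {k | ∃ S : Set V, IsResolving H S ∧ S.Finite ∧ S.ncard = k}

/-- The cycle graph on `ZMod n` (for `n ≥ 3`): `i` is adjacent to `i ± 1`. -/
def cycGraph (n : ℕ) : SimpleGraph (ZMod n) :=
  SimpleGraph.fromRel (fun i j => j = i + 1)

/-- The closed neighborhood `N[S]` of a set `S` in `H`. -/
def closedNbhd {V : Type*} (H : SimpleGraph V) (S : Set V) : Set V :=
  S ∪ {x | ∃ s ∈ S, H.Adj x s}

/-!
A single vertex cannot resolve two of its own neighbors, so minimum degree two forces `2 ≤ dim`.

For the upper bound take as landmarks all vertices other than `u₀` in the first copy and other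
than `range f` and one further vertex `v₀` in the second, where the fiber of `f` through `u₀` has
a second element. Adjacency to landmarks tells apart all remaining pairs, except possibly `u₀` and
a vertex `y` with `N(u₀) = f⁻¹(y) \ {u₀}`. On a cycle, if every `u₀` in a nontrivial fiber had
such a twin `y`, then both neighbors of `u₀` would lie in a common, hence nontrivial, fiber; going
around the cycle, every vertex would have a twin and `f` would have period two. Then `u₀ + 3` lies
in the fiber over `y`, so it is `u₀` or a neighbor of `u₀`; this forces `n ≤ 4`, and `n = 3` would
make `f` constant. For `n = 4`, `y` has a neighbor outside the two-element set `range f`, and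
choosing `v₀` different from it makes this neighbor a landmark separating `u₀` from `y`.
-/

section Resolving

variable {V : Type*} {H : SimpleGraph V} {S : Set V}

theorem metricDim_le_ncard (hS : IsResolving H S) (hfin : S.Finite) : metricDim H ≤ S.ncard :=
  Nat.sInf_le ⟨S, hS, hfin, rfl⟩

theorem isResolving_of_injOn_neighborSet_inter (hH : H.Connected)
    (hS : Set.InjOn (fun x => H.neighborSet x ∩ S) Sᶜ) : IsResolving H S := by
  intro x y hxy
  by_contra! hdist
  have hx : x ∉ S := fun hx =>
    hxy (hH.dist_eq_zero_iff.1 ((hdist x hx).symm.trans SimpleGraph.dist_self)).symm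
  have hy : y ∉ S := fun hy =>
    hxy (hH.dist_eq_zero_iff.1 ((hdist y hy).trans SimpleGraph.dist_self))
  refine hxy (hS hx hy (Set.ext fun w => and_congr_left fun hw => ?_))
  rw [SimpleGraph.mem_neighborSet, SimpleGraph.mem_neighborSet, ← SimpleGraph.dist_eq_one_iff_adj,
    ← SimpleGraph.dist_eq_one_iff_adj, hdist w hw]

theorem IsResolving.two_le_ncard [Nonempty V] (hS : IsResolving H S) (hfin : S.Finite)
    (hH : ∀ v, (H.neighborSet v).Nontrivial) : 2 ≤ S.ncard := by
  obtain ⟨a, -, b, -, hab⟩ := hH (Classical.arbitrary V)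
  obtain ⟨w, hw, -⟩ := hS a b hab
  obtain ⟨p, hp, q, hq, hpq⟩ := hH w
  obtain ⟨w', hw', hdist⟩ := hS p q hpq
  refine (Set.one_lt_ncard hfin).2 ⟨w, hw, w', hw', ?_⟩
  rintro rfl
  exact hdist ((SimpleGraph.dist_eq_one_iff_adj.2 (SimpleGraph.Adj.symm hp)).trans
    (SimpleGraph.dist_eq_one_iff_adj.2 (SimpleGraph.Adj.symm hq)).symm)

theorem two_le_metricDim [Finite V] (hconn : H.Connected)
    (hH : ∀ v, (H.neighborSet v).Nontrivial) : 2 ≤ metricDim H := by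
  have := hconn.nonempty
  have huniv : IsResolving H Set.univ := isResolving_of_injOn_neighborSet_inter hconn (by simp)
  refine le_csInf ⟨_, Set.univ, huniv, Set.toFinite _, rfl⟩ ?_
  rintro _ ⟨T, hT, hfin, rfl⟩
  exact hT.two_le_ncard hfin hH

end Resolving

section Functigraph

variable {V : Type*} {G : SimpleGraph V} {f : V → V}

theorem neighborSet_functigraph_inl (G : SimpleGraph V) (f : V → V) (a : V) :
    (functigraph G f).neighborSet (Sum.inl a) =
      Sum.inl '' G.neighborSet a ∪ {Sum.inr (f a)} := by
  ext (x | x)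
  · simpa [functigraph, G.adj_comm x a] using G.ne_of_adj
  · simp [functigraph, eq_comm]

theorem neighborSet_functigraph_inr (G : SimpleGraph V) (f : V → V) (b : V) :
    (functigraph G f).neighborSet (Sum.inr b) =
      Sum.inl '' (f ⁻¹' {b}) ∪ Sum.inr '' G.neighborSet b := by
  ext (x | x)
  · simp [functigraph]
  · simpa [functigraph, G.adj_comm x b] using G.ne_of_adj

theorem functigraph_connected (hG : G.Connected) : (functigraph G f).Connected := by
  let inrHom : G →g functigraph G f :=
    ⟨Sum.inr, fun {a b} hab => by
      rw [← SimpleGraph.mem_neighborSet, neighborSet_functigraph_inr]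
      simpa using hab⟩
  have reachable_inl (a : V) : (functigraph G f).Reachable (Sum.inl a) (Sum.inr (f a)) := by
    refine SimpleGraph.Adj.reachable ?_
    rw [← SimpleGraph.mem_neighborSet, neighborSet_functigraph_inl]
    simp
  obtain ⟨c⟩ := hG.nonempty
  refine SimpleGraph.connected_iff_exists_forall_reachable _ |>.2 ⟨Sum.inr c, ?_⟩
  rintro (a | b)
  · exact ((hG c (f a)).map inrHom).trans (reachable_inl a).symm
  · exact (hG c b).map inrHom

theorem neighborSet_functigraph_nontrivial (hG : ∀ v, (G.neighborSet v).Nontrivial) (x : V ⊕ V) :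
    ((functigraph G f).neighborSet x).Nontrivial := by
  rcases x with a | b
  · rw [neighborSet_functigraph_inl]
    exact ((hG a).image Sum.inl_injective).mono Set.subset_union_left
  · rw [neighborSet_functigraph_inr]
    exact ((hG b).image Sum.inr_injective).mono Set.subset_union_right

/-- A vertex `u` of the first copy and a vertex `y` of the second copy are fiber twins if, inside
`C(G, f)`, they have the same neighbors in the first copy apart from `u` itself, so that adjacency
to the other vertices of the first copy does not tell them apart. -/
def IsFiberTwin (G : SimpleGraph V) {W : Type*} (f : V → W) (u : V) (y : W) : Prop :=
  G.neighborSet u = f ⁻¹' {y} \ {u}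

theorem IsFiberTwin.apply_eq_of_adj {W : Type*} {f : V → W} {u v : V} {y : W}
    (h : IsFiberTwin G f u y) (huv : G.Adj u v) : f v = y :=
  (h.subset huv).1

theorem exists_notMem_range_not_neighborSet_subset [Finite V]
    (hG : ∀ v, (G.neighborSet v).Nontrivial) (hf : (Set.range f).ncard ≤ 2)
    (hV : 4 ≤ Nat.card V) (u : V) :
    ∃ v₀ ∉ Set.range f, ∀ y, IsFiberTwin G f u y → ¬ G.neighborSet y ⊆ insert v₀ (Set.range f) := by
  obtain ⟨w, hw⟩ := (hG u).nonempty
  have hnbhd : ¬ G.neighborSet (f w) ⊆ Set.range f := by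
    intro hsub
    have hle := Set.ncard_le_ncard (Set.insert_subset (Set.mem_range_self w) hsub)
    rw [Set.ncard_insert_of_notMem (by simp)] at hle
    have := Set.one_lt_ncard_iff_nontrivial.2 (hG (f w))
    lia
  obtain ⟨v, hv, hvf⟩ := Set.not_subset.1 hnbhd
  have hcompl : 1 < (Set.range f)ᶜ.ncard := by
    rw [Set.ncard_compl]
    lia
  obtain ⟨v₀, hv₀, hne⟩ := Set.exists_ne_of_one_lt_ncard hcompl v
  refine ⟨v₀, hv₀, fun y hy hsub => ?_⟩
  rw [← hy.apply_eq_of_adj hw] at hsub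
  exact (hsub hv).elim hne.symm hvf

/-- The candidate resolving set of `C(G, f)`, consisting of all vertices except `u₀` in the first
copy and `{v₀} ∪ range f` in the second. -/
def landmarkSet (f : V → V) (u₀ v₀ : V) : Set (V ⊕ V) :=
  (insert (Sum.inl u₀) (Sum.inr '' insert v₀ (Set.range f)))ᶜ

theorem ncard_landmarkSet [Finite V] {u₀ v₀ : V} (hv₀ : v₀ ∉ Set.range f) :
    (landmarkSet f u₀ v₀).ncard = 2 * (Nat.card V - 1) - (Set.range f).ncard := by
  have hcompl : (insert (Sum.inl u₀) (Sum.inr '' insert v₀ (Set.range f)) : Set (V ⊕ V)).ncard =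
      (Set.range f).ncard + 2 := by
    rw [Set.ncard_insert_of_notMem (by simp), Set.ncard_image_of_injective _ Sum.inr_injective,
      Set.ncard_insert_of_notMem hv₀]
  rw [landmarkSet, Set.ncard_compl, hcompl, Nat.card_sum]
  lia

theorem neighborSet_inl_inter_landmarkSet (G : SimpleGraph V) (f : V → V) (u₀ v₀ : V) :
    (functigraph G f).neighborSet (Sum.inl u₀) ∩ landmarkSet f u₀ v₀ =
      Sum.inl '' G.neighborSet u₀ := by
  ext (x | x)
  · simpa [neighborSet_functigraph_inl, landmarkSet] using fun h : G.Adj u₀ x => h.ne'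
  · simpa [neighborSet_functigraph_inl, landmarkSet] using fun h _ => ⟨u₀, h.symm⟩

theorem neighborSet_inr_inter_landmarkSet (G : SimpleGraph V) (f : V → V) (u₀ v₀ y : V) :
    (functigraph G f).neighborSet (Sum.inr y) ∩ landmarkSet f u₀ v₀ =
      Sum.inl '' (f ⁻¹' {y} \ {u₀}) ∪ Sum.inr '' (G.neighborSet y \ insert v₀ (Set.range f)) := by
  ext (x | x) <;> simp [neighborSet_functigraph_inr, landmarkSet]

theorem neighborSet_inl_inter_landmarkSet_eq_iff (u₀ v₀ y : V) :
    (functigraph G f).neighborSet (Sum.inl u₀) ∩ landmarkSet f u₀ v₀ =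
        (functigraph G f).neighborSet (Sum.inr y) ∩ landmarkSet f u₀ v₀ ↔
      IsFiberTwin G f u₀ y ∧ G.neighborSet y ⊆ insert v₀ (Set.range f) := by
  rw [neighborSet_inl_inter_landmarkSet, neighborSet_inr_inter_landmarkSet, IsFiberTwin,
    ← Set.sdiff_eq_empty]
  refine ⟨fun h => ⟨?_, ?_⟩, fun ⟨hinl, hinr⟩ => ?_⟩
  · simpa [Set.preimage_image_eq _ Sum.inl_injective] using congrArg (Sum.inl ⁻¹' ·) h
  · simpa [Set.preimage_image_eq _ Sum.inr_injective, eq_comm] using congrArg (Sum.inr ⁻¹' ·) h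
  · rw [hinl, hinr, Set.image_empty, Set.union_empty]

theorem eq_of_neighborSet_inr_inter_landmarkSet_eq {u₀ v₀ y y' : V}
    (hu₀ : ∃ u ≠ u₀, f u = f u₀) (hy : y ∈ Set.range f)
    (h : (functigraph G f).neighborSet (Sum.inr y) ∩ landmarkSet f u₀ v₀ =
      (functigraph G f).neighborSet (Sum.inr y') ∩ landmarkSet f u₀ v₀) : y = y' := by
  obtain ⟨u, hu, rfl⟩ : ∃ u ≠ u₀, f u = y := by
    obtain ⟨u, rfl⟩ := hy
    by_cases hu : u = u₀
    · rwa [hu]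
    · exact ⟨u, hu, rfl⟩
  rw [neighborSet_inr_inter_landmarkSet, neighborSet_inr_inter_landmarkSet, Set.ext_iff] at h
  simpa [hu] using h (Sum.inl u)

theorem isResolving_landmarkSet (hG : G.Connected) {u₀ v₀ : V} (hu₀ : ∃ u ≠ u₀, f u = f u₀)
    (htwin : ∀ y, IsFiberTwin G f u₀ y → ¬ G.neighborSet y ⊆ insert v₀ (Set.range f)) :
    IsResolving (functigraph G f) (landmarkSet f u₀ v₀) := by
  refine isResolving_of_injOn_neighborSet_inter (functigraph_connected hG) ?_
  have inl_ne_inr (y : V) : (functigraph G f).neighborSet (Sum.inl u₀) ∩ landmarkSet f u₀ v₀ ≠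
      (functigraph G f).neighborSet (Sum.inr y) ∩ landmarkSet f u₀ v₀ := fun h =>
    have ⟨hy, hsub⟩ := (neighborSet_inl_inter_landmarkSet_eq_iff u₀ v₀ y).1 h
    htwin y hy hsub
  rw [landmarkSet, compl_compl, ← landmarkSet]
  rintro _ (rfl | ⟨y, hy, rfl⟩) _ (rfl | ⟨y', hy', rfl⟩) h
  · rfl
  · exact (inl_ne_inr y' h).elim
  · exact (inl_ne_inr y h.symm).elim
  · rcases hy with rfl | hy
    · rcases hy' with rfl | hy'
      · rfl
      · rw [eq_of_neighborSet_inr_inter_landmarkSet_eq hu₀ hy' h.symm]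
    · rw [eq_of_neighborSet_inr_inter_landmarkSet_eq hu₀ hy h]

end Functigraph

section Cycle

variable {n : ℕ}

theorem neighborSet_cycGraph (hn : n ≠ 1) (a : ZMod n) :
    (cycGraph n).neighborSet a = {a + 1, a - 1} := by
  have := ZMod.nontrivial_iff.2 hn
  ext b
  have hne : b = a + 1 ∨ b = a - 1 → a ≠ b := by
    rintro (rfl | rfl) <;> simp [eq_sub_iff_add_eq]
  simpa [cycGraph, eq_sub_iff_add_eq, eq_comm] using hne

theorem neighborSet_cycGraph_nontrivial (hn : 3 ≤ n) (a : ZMod n) :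
    ((cycGraph n).neighborSet a).Nontrivial := by
  have : Fact (2 < n) := ⟨hn⟩
  rw [neighborSet_cycGraph (by lia)]
  refine Set.nontrivial_pair fun h => ZMod.neg_one_ne_one (n := n) ?_
  linear_combination -h

theorem zmod_induction [NeZero n] {p : ZMod n → Prop} {a : ZMod n} (ha : p a)
    (hsucc : ∀ x, p x → p (x + 1)) (x : ZMod n) : p x := by
  obtain ⟨k, hk⟩ := ZMod.natCast_zmod_surjective (x - a)
  have hadd (k : ℕ) : p (a + k) := by
    induction k with
    | zero => simpa using ha
    | succ k ih => simpa [add_assoc] using hsucc _ ih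
  simpa [hk] using hadd k

theorem cycGraph_connected [NeZero n] : (cycGraph n).Connected := by
  refine SimpleGraph.connected_iff_exists_forall_reachable _ |>.2 ⟨0, ?_⟩
  refine zmod_induction (SimpleGraph.Reachable.refl 0) fun x hx => hx.trans ?_
  by_cases h : x = x + 1
  · rw [← h]
  · exact SimpleGraph.Adj.reachable ⟨h, Or.inl rfl⟩

variable {α : Type*} {f : ZMod n → α}

theorem range_subset_pair_of_periodic_two [NeZero n] (hf : Function.Periodic f 2) :
    Set.range f ⊆ {f 0, f 1} := by
  rintro _ ⟨x, rfl⟩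
  let T : Set α := {f 0, f 1}
  refine (zmod_induction (p := fun x => f x ∈ T ∧ f (x + 1) ∈ T) (a := 0) (by simp [T])
    (fun x hx => ⟨hx.2, ?_⟩) x).1
  rw [add_assoc, one_add_one_eq_two, hf x]
  exact hx.1

theorem forall_exists_isFiberTwin (hn : 3 ≤ n) (hf : ¬ Function.Injective f)
    (htwin : ∀ u, (∃ u' ≠ u, f u' = f u) → ∃ y, IsFiberTwin (cycGraph n) f u y) (u : ZMod n) :
    ∃ y, IsFiberTwin (cycGraph n) f u y := by
  have : NeZero n := ⟨by lia⟩
  obtain ⟨a, b, hfab, hab⟩ := Function.not_injective_iff.1 hf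
  refine htwin u (zmod_induction (p := fun x => ∃ x' ≠ x, f x' = f x) (a := a)
    ⟨b, hab.symm, hfab.symm⟩ (fun x hx => ?_) u)
  obtain ⟨y, hy⟩ := htwin x hx
  obtain ⟨v, hv, hvx⟩ := (neighborSet_cycGraph_nontrivial hn x).exists_ne (x + 1)
  refine ⟨v, hvx, (hy.apply_eq_of_adj hv).trans (hy.apply_eq_of_adj ?_).symm⟩
  rw [← SimpleGraph.mem_neighborSet, neighborSet_cycGraph (by lia)]
  simp

theorem periodic_two_of_isFiberTwin (hn : n ≠ 1)
    (htwin : ∀ u, ∃ y, IsFiberTwin (cycGraph n) f u y) : Function.Periodic f 2 := by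
  intro x
  obtain ⟨y, hy⟩ := htwin (x + 1)
  have hval (v : ZMod n) (hv : v = x + 1 + 1 ∨ v = x + 1 - 1) : f v = y := by
    apply hy.apply_eq_of_adj
    rwa [← SimpleGraph.mem_neighborSet, neighborSet_cycGraph hn]
  exact (hval _ (Or.inl (by ring))).trans (hval _ (Or.inr (by ring))).symm

theorem eq_three_or_eq_four_of_isFiberTwin (hn : 3 ≤ n) (hf : Function.Periodic f 2) {u : ZMod n}
    {y : α} (htwin : IsFiberTwin (cycGraph n) f u y) : n = 3 ∨ n = 4 := by
  rw [IsFiberTwin, neighborSet_cycGraph (by lia)] at htwin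
  have hy : f (u + 1) = y := (htwin.subset (Set.mem_insert _ _)).1
  have hmem : u + 3 = u ∨ u + 3 = u + 1 ∨ u + 3 = u - 1 := by
    refine or_iff_not_imp_left.2 fun h => htwin.superset ⟨?_, h⟩
    rw [Set.mem_preimage, Set.mem_singleton_iff, ← hy, ← hf (u + 1)]
    ring_nf
  have hdvd : n ∣ 3 ∨ n ∣ 2 ∨ n ∣ 4 := by
    simp only [← ZMod.natCast_eq_zero_iff]
    push_cast
    refine hmem.imp ?_ (Or.imp ?_ ?_) <;> intro h <;> linear_combination h
  rcases hdvd with h | h | h <;> have := Nat.le_of_dvd (by norm_num) h <;> lia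

theorem eq_four_of_isFiberTwin (hn : 3 ≤ n) (hf : (Set.range f).Nontrivial)
    (htwin : ∀ u, ∃ y, IsFiberTwin (cycGraph n) f u y) : n = 4 := by
  have hper := periodic_two_of_isFiberTwin (by lia) htwin
  obtain ⟨y, hy⟩ := htwin 0
  rcases eq_three_or_eq_four_of_isFiberTwin hn hper hy with rfl | h
  · have h01 : f 1 = f 0 := (hper 1).symm
    refine absurd (hf.mono (range_subset_pair_of_periodic_two hper)) ?_
    simp [h01]
  · exact h

theorem exists_isResolving_landmarkSet {f : ZMod n → ZMod n} (hf : 1 < (Set.range f).ncard)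
    (hfn : (Set.range f).ncard < n) :
    ∃ u₀, ∃ v₀ ∉ Set.range f,
      IsResolving (functigraph (cycGraph n) f) (landmarkSet f u₀ v₀) := by
  have hn : 3 ≤ n := by lia
  have : NeZero n := ⟨by lia⟩
  have hsurj : ¬ Function.Surjective f := fun h => by
    rw [h.range_eq, Set.ncard_univ, Nat.card_zmod] at hfn
    exact hfn.false
  have hinj : ¬ Function.Injective f := fun h => hsurj (Finite.surjective_of_injective h)
  by_cases htwin : ∀ u, (∃ u' ≠ u, f u' = f u) → ∃ y, IsFiberTwin (cycGraph n) f u y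
  · have htwin' := forall_exists_isFiberTwin hn hinj htwin
    have hper := periodic_two_of_isFiberTwin (by lia) htwin'
    have hn4 := eq_four_of_isFiberTwin hn (Set.one_lt_ncard_iff_nontrivial.1 hf) htwin'
    have hcard : (Set.range f).ncard ≤ 2 :=
      (Set.ncard_le_ncard (range_subset_pair_of_periodic_two hper)).trans
        ((Set.ncard_insert_le _ _).trans (by simp))
    obtain ⟨u₀, u, hfu, hu⟩ := Function.not_injective_iff.1 hinj
    obtain ⟨v₀, hv₀, hnbhd⟩ := exists_notMem_range_not_neighborSet_subset
      (neighborSet_cycGraph_nontrivial hn) hcard (by simp [hn4]) u₀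
    exact ⟨u₀, v₀, hv₀, isResolving_landmarkSet cycGraph_connected ⟨u, hu.symm, hfu.symm⟩ hnbhd⟩
  · push Not at htwin
    obtain ⟨u₀, hu₀, hno⟩ := htwin
    obtain ⟨v₀, hv₀⟩ := not_forall.1 hsurj
    exact ⟨u₀, v₀, hv₀, isResolving_landmarkSet cycGraph_connected hu₀
      fun y hy => (hno y hy).elim⟩

end Cycle

theorem stmt16 (n : ℕ) (hn : 3 <= n) (f : ZMod n -> ZMod n) (s : ℕ)
    (hs : s = (Set.range f).ncard) (hs1 : 1 < s) (hs2 : s < n) :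
    2 <= metricDim (functigraph (cycGraph n) f) ∧
    metricDim (functigraph (cycGraph n) f) <= 2 * (n - 1) - s := by
  subst hs
  have : NeZero n := ⟨by lia⟩
  obtain ⟨u₀, v₀, hv₀, hS⟩ := exists_isResolving_landmarkSet hs1 hs2
  constructor
  · exact two_le_metricDim (functigraph_connected cycGraph_connected)
      (neighborSet_functigraph_nontrivial (neighborSet_cycGraph_nontrivial hn))
  · simpa [ncard_landmarkSet hv₀] using metricDim_le_ncard hS (Set.toFinite _)
end

section
/- Let Cₙ be the cycle of order n ≥ 3 with two disjoint copies G₁ (vertices u₁,…,uₙ) and G₂ (vertices v₁,…,vₙ), and let f₀ : V(G₁) → V(G₂) be the constant function f₀(uᵢ) = v₁ for all i. Then every resolving set S of C(Cₙ, f₀) contains at least two vertices of G₁ and at least one vertex of V(G₂) − {v₁}. -/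
/-!
Automorphisms preserve distances, so an automorphism fixing a resolving set pointwise also fixes
every other vertex. For a constant map `f₀ = v`, every automorphism of `G₁`, and every automorphism
of `G₂` fixing `v`, extends to `C(G, f₀)` by the identity on the other copy. A resolving set
therefore leaves neither copy with a nontrivial automorphism of this kind fixing its trace there.
In a cycle, the reflection through a vertex is nontrivial and fixes that vertex, so the trace on
`G₁` is not contained in a single vertex and the trace on `G₂` is not contained in `{v}`.
-/

section Distance

variable {V V' : Type*} {G : SimpleGraph V} {G' : SimpleGraph V'}

theorem edist_hom_le (φ : G →g G') (x y : V) : G'.edist (φ x) (φ y) ≤ G.edist x y :=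
  le_iInf fun p => by simpa only [SimpleGraph.Walk.length_map] using SimpleGraph.edist_le (p.map φ)

theorem edist_iso (φ : G ≃g G') (x y : V) : G'.edist (φ x) (φ y) = G.edist x y := by
  refine (edist_hom_le φ.toHom x y).antisymm ?_
  simpa using edist_hom_le φ.symm.toHom (φ x) (φ y)

theorem dist_iso (φ : G ≃g G') (x y : V) : G'.dist (φ x) (φ y) = G.dist x y :=
  congrArg ENat.toNat (edist_iso φ x y)

end Distance

/-- `S` is a determining (or fixing) set of `H`: only the trivial automorphism fixes `S` pointwise.
Symmetries of a functigraph constrain its resolving sets through this property. -/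
def IsDetermining {V : Type*} (H : SimpleGraph V) (S : Set V) : Prop :=
  ∀ φ : H ≃g H, (∀ x ∈ S, φ x = x) → φ = 1

theorem IsDetermining.mono {V : Type*} {H : SimpleGraph V} {S T : Set V}
    (hS : IsDetermining H S) (hST : S ⊆ T) : IsDetermining H T :=
  fun φ hφ => hS φ fun x hx => hφ x (hST hx)

theorem IsResolving.isDetermining {V : Type*} {H : SimpleGraph V} {S : Set V}
    (hS : IsResolving H S) : IsDetermining H S := by
  intro φ hφ
  ext x
  by_contra hx
  obtain ⟨w, hw, hdist⟩ := hS (φ x) x hx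
  apply hdist
  calc H.dist (φ x) w = H.dist (φ x) (φ w) := by rw [hφ w hw]
    _ = H.dist x w := dist_iso φ x w

section Functigraph

variable {V V' : Type*} {G : SimpleGraph V} {G' : SimpleGraph V'}

/-- The isomorphism of functigraphs acting as `φ` on the first copy and as `ψ` on the second. It
extends automorphisms of the two copies of `G` to the functigraph. -/
def functigraphCongr {f : V → V} {f' : V' → V'} (φ ψ : G ≃g G')
    (h : ∀ x, ψ (f x) = f' (φ x)) : functigraph G f ≃g functigraph G' f' where
  toEquiv := Equiv.sumCongr φ.toEquiv ψ.toEquiv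
  map_rel_iff' := by
    rintro (a | a) (b | b) <;>
      simp [functigraph, SimpleGraph.fromRel_adj, ← h, SimpleGraph.Iso.map_adj_iff]

theorem IsDetermining.preimage_inl {v : V} {S : Set (V ⊕ V)}
    (hS : IsDetermining (functigraph G fun _ => v) S) : IsDetermining G (Sum.inl ⁻¹' S) := by
  intro φ hφ
  have extension_eq_one :
      functigraphCongr (f := fun _ => v) (f' := fun _ => v) φ 1 (fun _ => rfl) = 1 := by
    refine hS _ ?_
    rintro (x | x) hx
    · exact congrArg Sum.inl (hφ x hx)
    · rfl
  ext x
  exact Sum.inl_injective (DFunLike.congr_fun extension_eq_one (Sum.inl x))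

theorem IsDetermining.range_union_preimage_inr {f : V → V} {S : Set (V ⊕ V)}
    (hS : IsDetermining (functigraph G f) S) :
    IsDetermining G (Set.range f ∪ Sum.inr ⁻¹' S) := by
  intro ψ hψ
  have extension_eq_one :
      functigraphCongr 1 ψ (fun x => hψ (f x) (Or.inl (Set.mem_range_self x))) = 1 := by
    refine hS _ ?_
    rintro (x | x) hx
    · rfl
    · exact congrArg Sum.inr (hψ x (Or.inr hx))
  ext x
  exact Sum.inr_injective (DFunLike.congr_fun extension_eq_one (Sum.inr x))

end Functigraph

/-- The reflection `i ↦ 2u - i` of the cycle: a symmetry fixing the vertex `u`, nontrivial once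
`2 < n`. -/
def cycGraphReflection {n : ℕ} (u : ZMod n) : cycGraph n ≃g cycGraph n where
  toEquiv := Equiv.pointReflection u
  map_rel_iff' := by
    intro i j
    simp only [cycGraph, SimpleGraph.fromRel_adj, Equiv.pointReflection_apply, vsub_eq_sub,
      vadd_eq_add]
    grind

theorem not_isDetermining_cycGraph_singleton {n : ℕ} [Fact (2 < n)] (u : ZMod n) :
    ¬ IsDetermining (cycGraph n) {u} := by
  intro h
  have reflection_eq_one : cycGraphReflection u = 1 :=
    h _ fun x hx => by rw [Set.mem_singleton_iff.mp hx]; exact Equiv.pointReflection_self u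
  have reflection_apply : cycGraphReflection u (u + 1) = u + -1 := by
    change u - (u + 1) + u = u + -1
    ring
  refine ZMod.neg_one_ne_one (n := n) (add_left_cancel (a := u) ?_)
  rw [← reflection_apply, reflection_eq_one, RelIso.one_apply]

theorem stmt18_general {V : Type*} {G : SimpleGraph V} (hG : ∀ u, ¬ IsDetermining G {u}) {v : V}
    {S : Set (V ⊕ V)} (hS : IsDetermining (functigraph G fun _ => v) S) :
    (Sum.inl ⁻¹' S).Nontrivial ∧ ∃ w, w ≠ v ∧ Sum.inr w ∈ S := by
  have exists_inl_ne (u : V) : ∃ x, Sum.inl x ∈ S ∧ x ≠ u :=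
    Set.not_subset.mp fun hsub => hG u (hS.preimage_inl.mono hsub)
  constructor
  · obtain ⟨x, hx, -⟩ := exists_inl_ne v
    obtain ⟨y, hy, hne⟩ := exists_inl_ne x
    exact ⟨y, hy, x, hx, hne⟩
  · by_contra! htrace
    have hsub : Set.range (fun _ : V => v) ∪ Sum.inr ⁻¹' S ⊆ {v} :=
      Set.union_subset Set.range_const_subset fun w hw =>
        by_contra fun hne => htrace w hne hw
    exact hG v (hS.range_union_preimage_inr.mono hsub)

theorem stmt18 (n : ℕ) (hn : 3 <= n) (S : Set (ZMod n ⊕ ZMod n))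
    (hres : IsResolving (functigraph (cycGraph n) (fun _ => (0 : ZMod n))) S) :
    2 <= {u : ZMod n | Sum.inl u ∈ S}.ncard ∧
    ∃ w : ZMod n, w ≠ 0 ∧ Sum.inr w ∈ S := by
  have : Fact (2 < n) := ⟨hn⟩
  have : NeZero n := ⟨by omega⟩
  rw [Nat.succ_le_iff, Set.one_lt_ncard_iff_nontrivial]
  exact stmt18_general not_isDetermining_cycGraph_singleton hres.isDetermining
end
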